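/- arXiv:1409.6107 — 4 statements merged into one kernel-verified Lean document; each statement's English description precedes it below -/
import Mathlib

section
/- Let (X, 𝒜, μ) be a finite measure space, f : X → X a bijection such that both f and f⁻¹ are measurable, c ∈ [0,1) a constant, and C ∈ 𝒜 a measurable set such that for every measurable set S ⊆ C one has μ(f(S)) ≤ c·μ(S) and μ(f⁻¹(S)) ≤ c·μ(S). Then μ(C ∩ f(C)) = 0 and μ(C ∩ f⁻¹(C)) = 0. -/
open MeasureTheory

/-- If `f` is a bimeasurable bijection of a finite measure space,
`c ∈ [0,1)`, and `C` is a measurable set such that every measurable `S ⊆ C` satisfies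
`μ(f(S)) ≤ c·μ(S)` and `μ(f⁻¹(S)) ≤ c·μ(S)`, then `μ(C ∩ f(C)) = 0` and
`μ(C ∩ f⁻¹(C)) = 0`. -/
theorem measure_inter_image_eq_zero_of_contracting
    (X : Type*) [MeasurableSpace X] (μ : Measure X) [IsFiniteMeasure μ]
    (f : X ≃ X) (hf : Measurable f) (hf' : Measurable f.symm)
    (c : ℝ) (hc0 : 0 ≤ c) (hc1 : c < 1)
    (C : Set X) (hC : MeasurableSet C)
    (h : ∀ S : Set X, S ⊆ C → MeasurableSet S →
      μ (f '' S) ≤ ENNReal.ofReal c * μ S ∧ μ (f.symm '' S) ≤ ENNReal.ofReal c * μ S) :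
    μ (C ∩ f '' C) = 0 ∧ μ (C ∩ f.symm '' C) = 0 := by
  have hc : ENNReal.ofReal c < 1 := by
    rw [← ENNReal.ofReal_one]
    exact (ENNReal.ofReal_lt_ofReal_iff one_pos).2 hc1
  have hS : MeasurableSet (C ∩ f '' C) := by
    rw [f.image_eq_preimage_symm]
    exact hC.inter (hf' hC)
  have hT : MeasurableSet (C ∩ f.symm '' C) := by
    rw [f.symm.image_eq_preimage_symm]
    exact hC.inter (hf hC)
  have e1 : f.symm '' (C ∩ f '' C) = C ∩ f.symm '' C := by
    rw [Set.image_inter f.symm.injective, Equiv.symm_image_image, Set.inter_comm]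
  have e2 : f '' (C ∩ f.symm '' C) = C ∩ f '' C := by
    rw [← e1, Equiv.image_symm_image]
  have h1 := (h _ Set.inter_subset_left hS).2
  have h2 := (h _ Set.inter_subset_left hT).1
  rw [e1] at h1
  rw [e2] at h2
  have h3 : μ (C ∩ f '' C) ≤ ENNReal.ofReal c * μ (C ∩ f '' C) :=
    h2.trans (mul_le_mul_right (h1.trans (mul_le_of_le_one_left' hc.le)) _)
  have h0 : μ (C ∩ f '' C) = 0 := by
    by_contra hne
    have := ENNReal.mul_lt_mul_left hne (measure_ne_top μ _) hc
    rw [one_mul] at this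
    exact absurd h3 (not_le.2 this)
  refine ⟨h0, ?_⟩
  rw [h0, mul_zero] at h1
  exact le_antisymm h1 (zero_le)
end

section
/- Let f : ℝ^d → ℝ^d be a bijection such that both f and f⁻¹ are continuously differentiable, let n ≥ 1 be an integer, a > 0, and let C ⊆ ℝ^d be a Borel set of finite Lebesgue measure such that |det D(f^n)(x)| ≤ e^{−n·a} and |det D(f^{−n})(x)| ≤ e^{−n·a} for every x ∈ C, where f^n and f^{−n} denote the n-th iterates of f and f⁻¹ and D denotes the Fréchet derivative. Then Leb(C ∩ f^n(C)) = 0 and Leb(C ∩ f^{−n}(C)) = 0. -/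
open MeasureTheory

theorem aux_image_le {d : ℕ} (g : EuclideanSpace ℝ (Fin d) → EuclideanSpace ℝ (Fin d))
    (hg : ContDiff ℝ 1 g) (c : ℝ) (s : Set (EuclideanSpace ℝ (Fin d))) (hs : MeasurableSet s)
    (h : ∀ x ∈ s, |((fderiv ℝ g x : EuclideanSpace ℝ (Fin d) →ₗ[ℝ]
          EuclideanSpace ℝ (Fin d)).det)| ≤ c) :
    volume (g '' s) ≤ ENNReal.ofReal c * volume s := by
  refine (addHaar_image_le_lintegral_abs_det_fderiv volume hs (f' := fderiv ℝ g)
    (fun x _ => ((hg.differentiable (by simp)) x).hasFDerivAt.hasFDerivWithinAt)).trans ?_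
  rw [← setLIntegral_const]
  exact setLIntegral_mono measurable_const fun x hx => ENNReal.ofReal_le_ofReal (h x hx)

theorem aux_iterate {d : ℕ} (g : EuclideanSpace ℝ (Fin d) → EuclideanSpace ℝ (Fin d))
    (hg : ContDiff ℝ 1 g) (n : ℕ) : ContDiff ℝ 1 (g^[n]) := by
  induction n with
  | zero => exact contDiff_id
  | succ k ih => exact ih.comp hg

/-- Let `f : ℝ^d → ℝ^d` be a bijection with `f` and `f⁻¹` continuously
differentiable, `n ≥ 1`, `a > 0`, and let `C` be a Borel set of finite Lebesgue measure on
which `|det D(f^n)| ≤ e^{-n·a}` and `|det D(f^{-n})| ≤ e^{-n·a}`.  Then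
`Leb(C ∩ f^n(C)) = 0` and `Leb(C ∩ f^{-n}(C)) = 0`. -/
theorem lebesgue_inter_iterate_eq_zero_of_small_jacobian
    (d : ℕ) (hd : 1 ≤ d)
    (f : EuclideanSpace ℝ (Fin d) ≃ EuclideanSpace ℝ (Fin d))
    (hf : ContDiff ℝ 1 f) (hf' : ContDiff ℝ 1 f.symm)
    (n : ℕ) (hn : 1 ≤ n) (a : ℝ) (ha : 0 < a)
    (C : Set (EuclideanSpace ℝ (Fin d))) (hC : MeasurableSet C)
    (hCfin : volume C < ⊤)
    (hdet : ∀ x ∈ C,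
      |((fderiv ℝ ((⇑f)^[n]) x : EuclideanSpace ℝ (Fin d) →ₗ[ℝ]
          EuclideanSpace ℝ (Fin d)).det)| ≤ Real.exp (-(n : ℝ) * a) ∧
      |((fderiv ℝ ((⇑f.symm)^[n]) x : EuclideanSpace ℝ (Fin d) →ₗ[ℝ]
          EuclideanSpace ℝ (Fin d)).det)| ≤ Real.exp (-(n : ℝ) * a)) :
    volume (C ∩ (⇑f)^[n] '' C) = 0 ∧ volume (C ∩ (⇑f.symm)^[n] '' C) = 0 := by
  have hg : ContDiff ℝ 1 ((⇑f)^[n]) := aux_iterate _ hf n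
  have hh : ContDiff ℝ 1 ((⇑f.symm)^[n]) := aux_iterate _ hf' n
  have hgh : Function.LeftInverse ((⇑f)^[n]) ((⇑f.symm)^[n]) :=
    Function.LeftInverse.iterate f.apply_symm_apply n
  have hhg : Function.LeftInverse ((⇑f.symm)^[n]) ((⇑f)^[n]) :=
    Function.LeftInverse.iterate f.symm_apply_apply n
  have hc : Real.exp (-(n : ℝ) * a) < 1 := by
    rw [Real.exp_lt_one_iff]
    have : (0 : ℝ) < n := by exact_mod_cast hn
    nlinarith [mul_pos this ha]
  generalize (⇑f)^[n] = g at *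
  generalize (⇑f.symm)^[n] = h at *
  generalize Real.exp (-(n : ℝ) * a) = c at *
  have e1 : g '' C = h ⁻¹' C := congrFun (Set.image_eq_preimage_of_inverse hhg hgh) C
  have e2 : h '' C = g ⁻¹' C := congrFun (Set.image_eq_preimage_of_inverse hgh hhg) C
  have m1 : MeasurableSet (C ∩ g '' C) := by
    rw [e1]; exact hC.inter (hh.continuous.measurable hC)
  have m2 : MeasurableSet (C ∩ h '' C) := by
    rw [e2]; exact hC.inter (hg.continuous.measurable hC)
  have i1 : h '' (C ∩ g '' C) = C ∩ h '' C := by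
    rw [Set.image_inter hgh.injective, hhg.image_image, Set.inter_comm]
  have i2 : g '' (C ∩ h '' C) = C ∩ g '' C := by
    rw [Set.image_inter hhg.injective, hgh.image_image, Set.inter_comm]
  have b1 := aux_image_le h hh c _ m1 fun x hx => (hdet x hx.1).2
  have b2 := aux_image_le g hg c _ m2 fun x hx => (hdet x hx.1).1
  rw [i1] at b1
  rw [i2] at b2
  have hc' : ENNReal.ofReal c < 1 := by simpa using hc
  have f1 : volume (C ∩ g '' C) ≠ ⊤ :=
    ((measure_mono Set.inter_subset_left).trans_lt hCfin).ne
  have z1 : volume (C ∩ g '' C) = 0 := by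
    by_contra hne
    have l1 : ENNReal.ofReal c * volume (C ∩ g '' C) < 1 * volume (C ∩ g '' C) :=
      ENNReal.mul_lt_mul_left hne f1 hc'
    have l2 : ENNReal.ofReal c * volume (C ∩ h '' C) ≤ 1 * volume (C ∩ h '' C) := by
      gcongr
    rw [one_mul] at l1 l2
    exact absurd (b2.trans (l2.trans b1)) (not_le.mpr l1)
  refine ⟨z1, ?_⟩
  rw [z1, mul_zero] at b1
  exact le_antisymm b1 zero_le
end

section
/- Let X be a measurable space, f : X → X a bijection such that both f and f⁻¹ are measurable, and let λ and μ be probability measures on X with μ absolutely continuous with respect to λ and μ f-invariant (μ(f⁻¹(S)) = μ(S) for every measurable S). Let B := {x ∈ X : (dμ/dλ)(x) > 0}, where dμ/dλ is the Radon–Nikodym derivative. Then λ(B) > 0, and every measurable set A with λ(A) > 1 − λ(B) satisfies: for every N ∈ ℕ there exists n ≥ N with μ(A ∩ f^{−n}(A)) > 0; in particular f^n(A) ∩ A ≠ ∅ for arbitrarily large n. (That is, λ is λ(B)-recurrent under f.) -/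
open MeasureTheory

/-- If `μ ≪ λ` are probability measures with `μ` invariant under a
bimeasurable bijection `f`, and `B` is the set where the Radon–Nikodym derivative `dμ/dλ`
is positive, then `λ(B) > 0` and every measurable set `A` with `λ(A) > 1 - λ(B)` returns:
for every `N` there is `n ≥ N` with `μ(A ∩ f^{-n}(A)) > 0`, and in particular
`f^n(A) ∩ A ≠ ∅`; that is, `λ` is `λ(B)`-recurrent under `f`. -/
theorem deltaRecurrent_of_abs_cont_invariant
    (X : Type*) [MeasurableSpace X]
    (f : X ≃ X) (hf : Measurable f) (hf' : Measurable f.symm)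
    (lam μ : Measure X) [IsProbabilityMeasure lam] [IsProbabilityMeasure μ]
    (hac : μ ≪ lam)
    (hinv : ∀ S : Set X, MeasurableSet S → μ (⇑f ⁻¹' S) = μ S)
    (B : Set X) (hB : B = {x : X | 0 < μ.rnDeriv lam x}) :
    0 < lam B ∧
      ∀ A : Set X, MeasurableSet A → 1 - lam B < lam A →
        ∀ N : ℕ, ∃ n : ℕ, N ≤ n ∧
          0 < μ (A ∩ (⇑f)^[n] ⁻¹' A) ∧ ((⇑f)^[n] '' A ∩ A).Nonempty := by
  have hm : Measurable (μ.rnDeriv lam) := Measure.measurable_rnDeriv μ lam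
  have key : ∀ S : Set X, μ S = 0 ↔ lam (B ∩ S) = 0 := by
    intro S
    have h := withDensity_apply_eq_zero (μ := lam) (s := S) hm
    rw [Measure.withDensity_rnDeriv_eq μ lam hac] at h
    rw [h, hB]
    simp only [pos_iff_ne_zero]
  have hpres : MeasurePreserving (⇑f) μ μ := by
    refine ⟨hf, Measure.ext fun S hS => ?_⟩
    rw [Measure.map_apply hf hS, hinv S hS]
  refine ⟨?_, ?_⟩
  · rw [pos_iff_ne_zero]
    intro h
    have h1 := (key Set.univ).2 (by simpa using h)
    simp at h1
  · intro A hA hlt N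
    have hA0 : μ A ≠ 0 := by
      intro h0
      have h1 := (key A).1 h0
      have h2 := measure_union_add_inter (μ := lam) B hA
      rw [h1, add_zero] at h2
      have h3 : lam B + lam A ≤ 1 := h2 ▸ prob_le_one
      have h4 : lam A ≤ 1 - lam B :=
        ENNReal.le_sub_of_add_le_left (measure_ne_top _ _) h3
      exact absurd hlt (not_lt.2 h4)
    obtain ⟨n, hn, hne⟩ :=
      hpres.conservative.exists_gt_measure_inter_ne_zero hA.nullMeasurableSet hA0 N
    refine ⟨n, hn.le, pos_iff_ne_zero.2 hne, ?_⟩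
    obtain ⟨x, hx, hx'⟩ := nonempty_of_measure_ne_zero hne
    exact ⟨_, ⟨x, hx, rfl⟩, hx'⟩
end

section
/- Let V be a finite-dimensional real normed vector space, E and F linear subspaces with E ∩ F = {0}, E + F = V, dim E = d_E ≥ 1 and dim F = d_F ≥ 1, and let A : V → V be a linear automorphism with A(E) = E and A(F) = F. Suppose σ > 1 satisfies σ·‖A u‖·‖w‖ ≤ ‖A w‖·‖u‖ for all u ∈ E, w ∈ F. Then |det(A|_E)|^{d_F} ≤ σ^{−d_E·d_F}·|det(A|_F)|^{d_E}, where A|_E and A|_F denote the restricted linear endomorphisms of E and of F. -/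
open MeasureTheory Metric in
lemma det_upper_aux {E : Type*} [NormedAddCommGroup E] [NormedSpace ℝ E] [FiniteDimensional ℝ E]
    (f : E →ₗ[ℝ] E) (a : ℝ) (ha : 0 ≤ a) (h : ∀ u, ‖f u‖ ≤ a * ‖u‖) :
    |LinearMap.det f| ≤ a ^ Module.finrank ℝ E := by
  let _ : MeasurableSpace E := borel E
  have : BorelSpace E := ⟨rfl⟩
  let μ : Measure E := Measure.addHaar
  have hsub : f '' closedBall 0 1 ⊆ closedBall 0 a := by
    rintro _ ⟨u, hu, rfl⟩
    rw [mem_closedBall_zero_iff] at hu ⊢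
    calc _ ≤ a * ‖u‖ := h u
      _ ≤ a * 1 := by gcongr
      _ = a := mul_one a
  have h1 := measure_mono (μ := μ) hsub
  rw [Measure.addHaar_image_linearMap, Measure.addHaar_closedBall' μ 0 ha] at h1
  have h0 : μ (closedBall 0 1) ≠ 0 := (measure_closedBall_pos μ 0 one_pos).ne'
  have ht : μ (closedBall 0 1) ≠ ⊤ := measure_closedBall_lt_top.ne
  rw [ENNReal.mul_le_mul_iff_left h0 ht] at h1
  exact (ENNReal.ofReal_le_ofReal_iff (by positivity)).1 h1

open MeasureTheory Metric in
lemma det_lower_aux {E : Type*} [NormedAddCommGroup E] [NormedSpace ℝ E] [FiniteDimensional ℝ E]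
    (f : E →ₗ[ℝ] E) (hf : Function.Surjective f) (c : ℝ) (hc : 0 < c)
    (h : ∀ u, c * ‖u‖ ≤ ‖f u‖) :
    c ^ Module.finrank ℝ E ≤ |LinearMap.det f| := by
  let _ : MeasurableSpace E := borel E
  have : BorelSpace E := ⟨rfl⟩
  let μ : Measure E := Measure.addHaar
  have hsub : closedBall 0 c ⊆ f '' closedBall 0 1 := by
    intro v hv
    obtain ⟨u, rfl⟩ := hf v
    refine ⟨u, ?_, rfl⟩
    rw [mem_closedBall_zero_iff] at hv ⊢
    have := h u
    by_contra! h2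
    nlinarith
  have h1 := measure_mono (μ := μ) hsub
  rw [Measure.addHaar_image_linearMap, Measure.addHaar_closedBall' μ 0 hc.le] at h1
  have h0 : μ (closedBall 0 1) ≠ 0 := (measure_closedBall_pos μ 0 one_pos).ne'
  have ht : μ (closedBall 0 1) ≠ ⊤ := measure_closedBall_lt_top.ne
  rw [ENNReal.mul_le_mul_iff_left h0 ht] at h1
  exact (ENNReal.ofReal_le_ofReal_iff (by positivity)).1 h1

/-- If `V = E ⊕ F` with `dim E = dE ≥ 1`, `dim F = dF ≥ 1`, and
`A : V ≃ V` is a linear automorphism preserving `E` and `F` that satisfies the `σ`-domination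
inequality (`σ > 1`), then `|det(A|_E)|^{dF} ≤ σ^{-dE·dF} · |det(A|_F)|^{dE}`. -/
theorem det_restrict_dominated
    (V : Type*) [NormedAddCommGroup V] [NormedSpace ℝ V] [FiniteDimensional ℝ V]
    (E F : Submodule ℝ V)
    (hEF_inf : E ⊓ F = ⊥) (hEF_sup : E ⊔ F = ⊤)
    (dE dF : ℕ) (hdE : Module.finrank ℝ E = dE) (hdF : Module.finrank ℝ F = dF)
    (hdE1 : 1 ≤ dE) (hdF1 : 1 ≤ dF)
    (A : V ≃ₗ[ℝ] V)
    (hAE : ∀ v ∈ E, A v ∈ E) (hAE' : E.map (A : V →ₗ[ℝ] V) = E)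
    (hAF : ∀ v ∈ F, A v ∈ F) (hAF' : F.map (A : V →ₗ[ℝ] V) = F)
    (σ : ℝ) (hσ : 1 < σ)
    (hdom : ∀ u ∈ E, ∀ w ∈ F, σ * ‖A u‖ * ‖w‖ ≤ ‖A w‖ * ‖u‖) :
    |LinearMap.det ((A : V →ₗ[ℝ] V).restrict hAE)| ^ dF ≤
      σ ^ (-((dE * dF : ℕ) : ℤ)) * |LinearMap.det ((A : V →ₗ[ℝ] V).restrict hAF)| ^ dE := by
  have hσ0 : 0 < σ := by linarith
  set f := (A : V →ₗ[ℝ] V).restrict hAE with hf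
  set g := (A : V →ₗ[ℝ] V).restrict hAF with hg
  have hgs : Function.Surjective g := by
    apply LinearMap.surjective_of_injective
    intro x y hxy
    have : A x = A y := congrArg Subtype.val hxy
    exact Subtype.ext (A.injective this)
  set T : E →L[ℝ] E := LinearMap.toContinuousLinearMap f with hT
  have hup : ∀ u, ‖f u‖ ≤ ‖T‖ * ‖u‖ := fun u => T.le_opNorm u
  have h1 := det_upper_aux f ‖T‖ T.opNorm_nonneg hup
  have hlow : ∀ w, (σ * ‖T‖) * ‖w‖ ≤ ‖g w‖ := by
    intro w
    rcases eq_or_ne w 0 with rfl | hw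
    · simp
    have hw0 : 0 < ‖w‖ := norm_pos_iff.2 hw
    have : ‖T‖ ≤ ‖g w‖ / (σ * ‖w‖) := by
      refine T.opNorm_le_bound (by positivity) fun u => ?_
      rw [div_mul_eq_mul_div, le_div_iff₀ (by positivity)]
      have := hdom u u.2 w w.2
      change ‖A u‖ * (σ * ‖(w : V)‖) ≤ ‖A w‖ * ‖(u : V)‖
      linarith
    rw [le_div_iff₀ (by positivity)] at this
    linarith
  have h2 : (σ * ‖T‖) ^ dF ≤ |LinearMap.det g| := by
    rcases T.opNorm_nonneg.eq_or_lt with h | h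
    · rw [← h, mul_zero, zero_pow (by lia)]
      exact abs_nonneg _
    · rw [← hdF]
      exact det_lower_aux g hgs _ (by positivity) hlow
  rw [hdE] at h1
  rw [zpow_neg, zpow_natCast, inv_mul_eq_div, le_div_iff₀ (by positivity)]
  calc |LinearMap.det f| ^ dF * σ ^ (dE * dF) ≤ (‖T‖ ^ dE) ^ dF * σ ^ (dE * dF) := by gcongr
    _ = ((σ * ‖T‖) ^ dF) ^ dE := by
      rw [← pow_mul, ← pow_mul, mul_pow, mul_comm dF dE, mul_comm]
    _ ≤ _ := by gcongr
end
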